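/- arXiv:2604.13982 — 7 statements merged into one kernel-verified Lean document; each statement's English description precedes it below -/
import Mathlib

section
/- Let A and A' be real Hilbert spaces and d a densely defined closed operator from A to A' admitting a Poincaré inequality: there is c > 0 with ‖z‖ ≤ c ‖d z‖ for every z ∈ dom d orthogonal to ker d. Let B ⊆ A be a subspace and π : A → A a bounded linear map with operator norm ‖π‖ such that range π ⊆ B, π v = v for every v ∈ B, π maps dom d into dom d, and there is a linear map π' : A' → A' with d(π v) = π'(d v) for all v ∈ dom d. Then for every v ∈ B ∩ dom d that is orthogonal to ker d ∩ B one has ‖v‖ ≤ c ‖π‖ ‖d v‖; i.e., a bounded cochain projection transfers the Poincaré inequality to the subcomplex. -/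
/-!
Let `p` be the orthogonal projection of `v` onto the closed subspace `ker d`, and `z = v - p`. Then
`z ∈ dom d` is orthogonal to `ker d` and `d z = d v`, so `‖z‖ ≤ c ‖d v‖`. Since `π v = v`, one has
`v - π z = π p`, which lies in `ker d ∩ B` because `d (π p) = π' (d p) = 0`. Hence `v` is orthogonal
to `v - π z`, so `‖v‖² = ⟪v, π z⟫ ≤ ‖v‖ ‖π‖ c ‖d v‖`.
-/

open scoped RealInnerProductSpace

/-- A bounded cochain projection transfers the Poincaré inequality to the
subcomplex. -/
theorem poincare_of_bounded_cochain_projection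
    {A A' : Type*} [NormedAddCommGroup A] [InnerProductSpace ℝ A] [CompleteSpace A]
    [NormedAddCommGroup A'] [InnerProductSpace ℝ A'] [CompleteSpace A']
    (d : A →ₗ.[ℝ] A') (hdense : Dense (d.domain : Set A)) (hclosed : d.IsClosed)
    (c : ℝ) (hc : 0 < c)
    (hpoincare : ∀ z : d.domain,
      (∀ y : d.domain, d y = 0 → ⟪(z : A), (y : A)⟫ = 0) → ‖(z : A)‖ ≤ c * ‖d z‖)
    (B : Submodule ℝ A) (π : A →L[ℝ] A)
    (hrange : ∀ x : A, π x ∈ B)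
    (hproj : ∀ x ∈ B, π x = x)
    (hmap : ∀ x ∈ d.domain, π x ∈ d.domain)
    (π' : A' →ₗ[ℝ] A')
    (hcomm : ∀ (v : d.domain) (h : π v ∈ d.domain), d ⟨π v, h⟩ = π' (d v)) :
    ∀ v : d.domain, (v : A) ∈ B →
      (∀ y : d.domain, d y = 0 → (y : A) ∈ B → ⟪(v : A), (y : A)⟫ = 0) →
      ‖(v : A)‖ ≤ c * ‖π‖ * ‖d v‖ := by
  intro v hvB hv
  -- `ker d` as a subspace of `A`, written as a preimage of the graph so that closedness is immediate.
  let K : Submodule ℝ A := d.graph.comap (LinearMap.inl ℝ A A')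
  have hK : ∀ x : A, x ∈ K ↔ ∃ y : d.domain, (y : A) = x ∧ d y = 0 := fun x => by
    simp [K, LinearPMap.mem_graph_iff]
  have hKclosed : IsClosed (K : Set A) :=
    IsClosed.preimage (f := fun x : A => (x, (0 : A'))) (by fun_prop) hclosed
  have : CompleteSpace K := hKclosed.completeSpace_coe
  obtain ⟨p, hp, hdp⟩ := (hK _).1 (K.starProjection_apply_mem (v : A))
  have hz : ‖((v - p : d.domain) : A)‖ ≤ c * ‖d v‖ := by
    have h := hpoincare (v - p) fun y hy => by
      have hyK : (y : A) ∈ K := (hK _).2 ⟨y, rfl, hy⟩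
      rw [Submodule.coe_sub, hp]
      exact K.starProjection_inner_eq_zero (v : A) (y : A) hyK
    rwa [d.map_sub, hdp, sub_zero] at h
  -- `π p` is a cocycle of the subcomplex, hence orthogonal to `v`.
  have horth : ⟪(v : A), π p⟫ = 0 :=
    hv ⟨π p, hmap _ p.2⟩ (by rw [hcomm, hdp, map_zero]) (hrange _)
  have hsq : ‖(v : A)‖ * ‖(v : A)‖ ≤ ‖(v : A)‖ * (c * ‖π‖ * ‖d v‖) := by
    calc ‖(v : A)‖ * ‖(v : A)‖ = ⟪(v : A), π ((v - p : d.domain) : A)⟫ := by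
          rw [Submodule.coe_sub, map_sub, hproj _ hvB, inner_sub_right, horth, sub_zero,
            real_inner_self_eq_norm_mul_norm]
      _ ≤ ‖(v : A)‖ * ‖π ((v - p : d.domain) : A)‖ := real_inner_le_norm _ _
      _ ≤ ‖(v : A)‖ * (‖π‖ * (c * ‖d v‖)) := by
          gcongr
          exact π.le_opNorm_of_le hz
      _ = ‖(v : A)‖ * (c * ‖π‖ * ‖d v‖) := by ring
  rcases (norm_nonneg (v : A)).eq_or_lt with h0 | hpos
  · rw [← h0]
    positivity
  · exact le_of_mul_le_mul_left hsq hpos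
end

section
/- Let A and A' be real Hilbert spaces, d a densely defined closed operator from A to A', B ⊆ A a closed subspace, and κ₁ > 0 a constant such that (‖v‖² + ‖d v‖²)^{1/2} ≤ κ₁ ‖d v‖ for every v ∈ B ∩ dom d orthogonal to ker d ∩ B. Then the image d(B ∩ dom d) is a closed subspace of A', and for every v ∈ dom d there exists a unique element Q v ∈ B ∩ dom d with Q v ⊥ (ker d ∩ B) and d(Q v) = P(d v), where P is the orthogonal projection of A' onto d(B ∩ dom d); moreover (‖Q v‖² + ‖d(Q v)‖²)^{1/2} ≤ κ₁ (‖v‖² + ‖d v‖²)^{1/2}. -/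
/-!
The kernel `K = ker d ∩ B` is a closed subspace of `A`, being cut out of the closed graph of `d` by
the condition of vanishing second component. Subtracting from `u ∈ B ∩ dom d` its
orthogonal projection on `K` does not change `d u`, so every element of `d(B ∩ dom d)` is `d u` for
some `u ∈ B ∩ dom d` orthogonal to `K` (`exists_orthogonal_preimage`).

The part of the graph of `d` lying over `B ∩ Kᗮ` (`reducedGraph`) is closed in `A × A'`, hence
complete, and the Poincaré inequality says that the second projection is antilipschitz on it. Its
range, which is `d(B ∩ dom d)`, is therefore closed (`isClosed_subImage`). The orthogonal
projection onto this image then exists and provides `Q v`. Uniqueness is the Poincaré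
inequality applied to a difference of two candidates, and the bound is the same inequality
together with `‖P (d v)‖ ≤ ‖d v‖`.
-/

open scoped RealInnerProductSpace

section

variable {A A' : Type*}
  [NormedAddCommGroup A] [InnerProductSpace ℝ A] [CompleteSpace A]
  [NormedAddCommGroup A'] [InnerProductSpace ℝ A'] [CompleteSpace A']

/-- The image `d(B ∩ dom d)` of the subcomplex, as a subset of `A'`. -/
def subImage (d : A →ₗ.[ℝ] A') (B : Submodule ℝ A) : Set A' :=
  {w : A' | ∃ u : d.domain, (u : A) ∈ B ∧ d u = w}

/-- The defining property of `Q v`: it lies in `B ∩ dom d`, is orthogonal to `ker d ∩ B`, and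
`d (Q v)` is the orthogonal projection of `d v` onto `d(B ∩ dom d)`. -/
def IsQ (d : A →ₗ.[ℝ] A') (B : Submodule ℝ A) (v Qv : d.domain) : Prop :=
  (Qv : A) ∈ B ∧
  (∀ y : d.domain, d y = 0 → (y : A) ∈ B → ⟪(Qv : A), (y : A)⟫ = 0) ∧
  d Qv ∈ subImage d B ∧
  ∀ w ∈ subImage d B, ⟪d v - d Qv, w⟫ = 0

/-- The subspace `ker d ∩ B` of `A`. -/
def kerIn (d : A →ₗ.[ℝ] A') (B : Submodule ℝ A) : Submodule ℝ A :=
  d.graph.comap (LinearMap.inl ℝ A A') ⊓ B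

lemma mem_kerIn {d : A →ₗ.[ℝ] A'} {B : Submodule ℝ A} {x : A} :
    x ∈ kerIn d B ↔ ∃ y : d.domain, (y : A) = x ∧ d y = 0 ∧ (y : A) ∈ B := by
  simp only [kerIn, Submodule.mem_inf, Submodule.mem_comap, LinearMap.inl_apply,
    LinearPMap.mem_graph_iff]
  constructor
  · rintro ⟨⟨y, rfl, h⟩, hx⟩
    exact ⟨y, rfl, h, hx⟩
  · rintro ⟨y, rfl, h, hx⟩
    exact ⟨⟨y, rfl, h⟩, hx⟩

lemma mem_kerIn_orthogonal {d : A →ₗ.[ℝ] A'} {B : Submodule ℝ A} {x : A} :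
    x ∈ (kerIn d B)ᗮ ↔
      ∀ y : d.domain, d y = 0 → (y : A) ∈ B → ⟪x, (y : A)⟫ = 0 := by
  rw [Submodule.mem_orthogonal']
  constructor
  · intro h y hy hyB
    exact h _ (mem_kerIn.2 ⟨y, rfl, hy, hyB⟩)
  · rintro h _ hx
    obtain ⟨y, rfl, hy, hyB⟩ := mem_kerIn.1 hx
    exact h y hy hyB

lemma isClosed_kerIn {d : A →ₗ.[ℝ] A'} (hclosed : d.IsClosed)
    {B : Submodule ℝ A} (hB : IsClosed (B : Set A)) : IsClosed (kerIn d B : Set A) := by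
  have h : IsClosed ((fun x : A => (x, (0 : A'))) ⁻¹' (d.graph : Set (A × A'))) :=
    IsClosed.preimage (by fun_prop) hclosed
  exact h.inter hB

/-- Every value of `d` on `B ∩ dom d` is attained at an element orthogonal to `ker d ∩ B`. -/
lemma exists_orthogonal_preimage {d : A →ₗ.[ℝ] A'} (hclosed : d.IsClosed)
    {B : Submodule ℝ A} (hB : IsClosed (B : Set A)) {w : A'} (hw : w ∈ subImage d B) :
    ∃ u : d.domain, (u : A) ∈ B ∧ (u : A) ∈ (kerIn d B)ᗮ ∧ d u = w := by
  obtain ⟨u, huB, rfl⟩ := hw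
  have : CompleteSpace (kerIn d B) := (isClosed_kerIn hclosed hB).completeSpace_coe
  obtain ⟨y, hy, hdy, hyB⟩ := mem_kerIn.1 ((kerIn d B).starProjection_apply_mem (u : A))
  refine ⟨u - y, B.sub_mem huB hyB, ?_, by rw [d.map_sub, hdy, sub_zero]⟩
  rw [Submodule.coe_sub, hy]
  exact (kerIn d B).sub_starProjection_mem_orthogonal (u : A)

/-- The graph of `d` restricted to the elements of `B` orthogonal to `ker d ∩ B`. -/
noncomputable def reducedGraph (d : A →ₗ.[ℝ] A') (B : Submodule ℝ A) : Submodule ℝ (A × A') :=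
  d.graph ⊓ (B ⊓ (kerIn d B)ᗮ).comap (LinearMap.fst ℝ A A')

lemma isClosed_subImage {d : A →ₗ.[ℝ] A'} (hclosed : d.IsClosed)
    {B : Submodule ℝ A} (hB : IsClosed (B : Set A)) {κ : ℝ} (hκ : 0 < κ)
    (hpoincare : ∀ u : d.domain, (u : A) ∈ B → (u : A) ∈ (kerIn d B)ᗮ →
      ‖(u : A)‖ ≤ κ * ‖d u‖) :
    IsClosed (subImage d B) := by
  have hcl : IsClosed (reducedGraph d B : Set (A × A')) := by
    have h : IsClosed (Prod.fst ⁻¹' ((B : Set A) ∩ ((kerIn d B)ᗮ : Submodule ℝ A)) :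
        Set (A × A')) :=
      (hB.inter (kerIn d B).isClosed_orthogonal).preimage continuous_fst
    exact IsClosed.inter hclosed h
  have : CompleteSpace (reducedGraph d B) := hcl.completeSpace_coe
  let f : reducedGraph d B →L[ℝ] A' :=
    (ContinuousLinearMap.snd ℝ A A').comp (reducedGraph d B).subtypeL
  -- `A × A'` carries the sup norm, whence the constant `κ + 1` rather than `κ`.
  have hf : AntilipschitzWith (κ + 1).toNNReal f := by
    refine AddMonoidHomClass.antilipschitz_of_bound f ?_
    rintro ⟨⟨x, w⟩, hg, hxB, hxK⟩
    obtain ⟨u, rfl, rfl⟩ := LinearPMap.mem_graph_iff d |>.1 hg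
    have h := hpoincare u hxB hxK
    have h0 := norm_nonneg (d u)
    rw [Real.coe_toNNReal _ (by positivity)]
    change max ‖(u : A)‖ ‖d u‖ ≤ (κ + 1) * ‖d u‖
    exact max_le (by linarith) (by nlinarith)
  have hrange : Set.range f = subImage d B := by
    ext w
    constructor
    · rintro ⟨⟨⟨x, w⟩, hg, hxB, hxK⟩, rfl⟩
      obtain ⟨u, rfl, rfl⟩ := LinearPMap.mem_graph_iff d |>.1 hg
      exact ⟨u, hxB, rfl⟩
    · intro hw
      obtain ⟨u, huB, huK, rfl⟩ := exists_orthogonal_preimage hclosed hB hw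
      exact ⟨⟨⟨u, d u⟩, d.mem_graph u, huB, huK⟩, rfl⟩
  rw [← hrange]
  exact hf.isClosed_range f.uniformContinuous

/-- The set `subImage d B` as a subspace of `A'`. -/
def subImageSubmodule (d : A →ₗ.[ℝ] A') (B : Submodule ℝ A) : Submodule ℝ A' :=
  (B.comap d.domain.subtype).map d.toFun

lemma mem_subImageSubmodule {d : A →ₗ.[ℝ] A'} {B : Submodule ℝ A} {w : A'} :
    w ∈ subImageSubmodule d B ↔ w ∈ subImage d B :=
  Iff.rfl

/-- Under a subcomplex Poincaré inequality, the image `d(B ∩ dom d)` is closed and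
there is a unique bounded "discrete solution" operator `Q`. -/
theorem exists_unique_Q_operator
    (d : A →ₗ.[ℝ] A') (hdense : Dense (d.domain : Set A)) (hclosed : d.IsClosed)
    (B : Submodule ℝ A) (hB : IsClosed (B : Set A))
    (κ₁ : ℝ) (hκ₁ : 0 < κ₁)
    (hpoincare : ∀ v : d.domain, (v : A) ∈ B →
      (∀ y : d.domain, d y = 0 → (y : A) ∈ B → ⟪(v : A), (y : A)⟫ = 0) →
      Real.sqrt (‖(v : A)‖ ^ 2 + ‖d v‖ ^ 2) ≤ κ₁ * ‖d v‖) :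
    IsClosed (subImage d B) ∧
    ∀ v : d.domain,
      (∃! Qv : d.domain, IsQ d B v Qv) ∧
      (∀ Qv : d.domain, IsQ d B v Qv →
        Real.sqrt (‖(Qv : A)‖ ^ 2 + ‖d Qv‖ ^ 2) ≤
          κ₁ * Real.sqrt (‖(v : A)‖ ^ 2 + ‖d v‖ ^ 2)) := by
  have hP : ∀ u : d.domain, (u : A) ∈ B → (u : A) ∈ (kerIn d B)ᗮ → ‖(u : A)‖ ≤ κ₁ * ‖d u‖ := by
    intro u huB huK
    refine le_trans (Real.le_sqrt_of_sq_le ?_) (hpoincare u huB (mem_kerIn_orthogonal.1 huK))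
    linarith [sq_nonneg ‖d u‖]
  have hC := isClosed_subImage hclosed hB hκ₁ hP
  refine ⟨hC, fun v => ⟨?_, ?_⟩⟩
  · have : CompleteSpace (subImageSubmodule d B) :=
      IsClosed.completeSpace_coe (s := subImage d B) (hs := hC)
    obtain ⟨q, hqB, hqK, hq⟩ := exists_orthogonal_preimage hclosed hB
      (mem_subImageSubmodule.1 ((subImageSubmodule d B).starProjection_apply_mem (d v)))
    refine ⟨q, ⟨hqB, mem_kerIn_orthogonal.1 hqK, ⟨q, hqB, rfl⟩, fun w hw => ?_⟩, ?_⟩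
    · rw [hq]
      exact (subImageSubmodule d B).starProjection_inner_eq_zero (d v) w
        (mem_subImageSubmodule.2 hw)
    · rintro r ⟨hrB, hrK, -, hr⟩
      have hdr : d r = (subImageSubmodule d B).starProjection (d v) :=
        ((subImageSubmodule d B).eq_starProjection_of_mem_of_inner_eq_zero
          (mem_subImageSubmodule.2 ⟨r, hrB, rfl⟩)
          (fun w hw => hr w (mem_subImageSubmodule.1 hw))).symm
      have h := hP (r - q) (B.sub_mem hrB hqB)
        ((kerIn d B)ᗮ.sub_mem (mem_kerIn_orthogonal.2 hrK) hqK)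
      rw [d.map_sub, hdr, hq, sub_self, norm_zero, mul_zero] at h
      exact sub_eq_zero.1 (Subtype.ext (norm_le_zero_iff.1 h))
  · rintro q ⟨hqB, hqK, hqI, hq⟩
    refine (hpoincare q hqB hqK).trans (mul_le_mul_of_nonneg_left ?_ hκ₁.le)
    -- Pythagoras for `d v = (d v - d q) + d q`.
    have h := norm_add_sq_real (d v - d q) (d q)
    rw [hq _ hqI, sub_add_cancel] at h
    refine Real.le_sqrt_of_sq_le ?_
    nlinarith [sq_nonneg ‖d v - d q‖, sq_nonneg ‖(v : A)‖]

end
end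

section
/- Let A^0, A^1, A^2 be real Hilbert spaces and d^0 : A^0 → A^1, d^1 : A^1 → A^2 densely defined closed operators with closed range such that range d^0 ⊆ ker d^1. Then range (d^1)* is closed, the three subspaces range d^0, H = ker d^1 ∩ ker (d^0)*, and range (d^1)* are mutually orthogonal closed subspaces of A^1, and A^1 = range d^0 ⊕ H ⊕ range (d^1)* (the Hodge decomposition). -/
/-!
The heart of the matter is the closed range theorem for `d¹`, in the form `range (d¹)* = (ker d¹)ᗮ`
(`adjointRangeSet_eq`). If `z ⊥ ker d¹`, then `d¹ x ↦ ⟪z, x⟫` is a well-defined functional on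
`range d¹`. The open mapping theorem, applied to the projection of the (complete) graph of `d¹`
onto the (complete) range of `d¹`, bounds it, and its Riesz representative `w` satisfies
`(d¹)* w = z`.

With `B = range d⁰` and `K = ker d¹`, both closed and `B ≤ K`, the three subspaces are therefore
`B`, `K ⊓ Bᗮ` and `Kᗮ`. The components of `v` are `P_B v`, `P_K v - P_B v` and `v - P_K v`,
and uniqueness follows from mutual orthogonality.
-/

open scoped RealInnerProductSpace

section

variable {A₀ A₁ A₂ : Type*}
  [NormedAddCommGroup A₀] [InnerProductSpace ℝ A₀] [CompleteSpace A₀]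
  [NormedAddCommGroup A₁] [InnerProductSpace ℝ A₁] [CompleteSpace A₁]
  [NormedAddCommGroup A₂] [InnerProductSpace ℝ A₂] [CompleteSpace A₂]

/-- The range of `d⁰`, as a subset of `A¹`. -/
def rangeSet (d0 : A₀ →ₗ.[ℝ] A₁) : Set A₁ := Set.range fun u : d0.domain => d0 u

/-- The harmonic space `H = ker d¹ ∩ ker (d⁰)*`, as a subset of `A¹`. -/
def harmonicSet (d0 : A₀ →ₗ.[ℝ] A₁) (d1 : A₁ →ₗ.[ℝ] A₂) : Set A₁ :=
  {v | (∃ h : v ∈ d1.domain, d1 ⟨v, h⟩ = 0) ∧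
    ∃ h : v ∈ d0.adjoint.domain, d0.adjoint ⟨v, h⟩ = 0}

/-- The range of `(d¹)*`, as a subset of `A¹`. -/
def adjointRangeSet (d1 : A₁ →ₗ.[ℝ] A₂) : Set A₁ :=
  Set.range fun w : d1.adjoint.domain => d1.adjoint w

/-- The kernel of a partially defined operator, as a subspace of the ambient space rather than of
the domain: the preimage of the graph under `x ↦ (x, 0)`. -/
def kerSub (d : A₁ →ₗ.[ℝ] A₂) : Submodule ℝ A₁ :=
  d.graph.comap (LinearMap.inl ℝ A₁ A₂)

lemma mem_kerSub (d : A₁ →ₗ.[ℝ] A₂) (v : A₁) :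
    v ∈ kerSub d ↔ ∃ h : v ∈ d.domain, d ⟨v, h⟩ = 0 := by
  simp [kerSub, LinearPMap.mem_graph_iff]

lemma isClosed_kerSub (d : A₁ →ₗ.[ℝ] A₂) (hd : d.IsClosed) :
    IsClosed (kerSub d : Set A₁) :=
  IsClosed.preimage (f := fun x : A₁ => (x, (0 : A₂))) (by fun_prop) hd

lemma coe_range_toFun (d : A₀ →ₗ.[ℝ] A₁) :
    (LinearMap.range d.toFun : Set A₁) = rangeSet d := rfl

lemma ker_adjoint_iff (d : A₀ →ₗ.[ℝ] A₁) (hd : Dense (d.domain : Set A₀)) (v : A₁) :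
    (∃ h : v ∈ d.adjoint.domain, d.adjoint ⟨v, h⟩ = 0) ↔
      v ∈ (LinearMap.range d.toFun)ᗮ := by
  rw [Submodule.mem_orthogonal']
  constructor
  · rintro ⟨h, h0⟩ _ ⟨u, rfl⟩
    have := LinearPMap.adjoint_isFormalAdjoint hd ⟨v, h⟩ u
    rw [h0, inner_zero_left] at this
    exact this.symm
  · intro h
    have h' : ∀ x : d.domain, ⟪(0 : A₀), (x : A₀)⟫ = ⟪v, d x⟫ := fun x => by
      rw [inner_zero_left]
      exact (h _ ⟨x, rfl⟩).symm
    exact ⟨LinearPMap.mem_adjoint_domain_of_exists v ⟨0, h'⟩,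
      LinearPMap.adjoint_apply_eq hd _ h'⟩

/-- The part of the closed range theorem that uses the open mapping theorem. -/
lemma mem_adjointRangeSet_of_mem_orthogonal (d : A₁ →ₗ.[ℝ] A₂)
    (hdense : Dense (d.domain : Set A₁)) (hclosed : d.IsClosed)
    (hrange : IsClosed (rangeSet d)) {z : A₁} (hz : z ∈ (kerSub d)ᗮ) :
    z ∈ adjointRangeSet d := by
  have : CompleteSpace d.graph := IsClosed.completeSpace_coe (hs := hclosed)
  have : CompleteSpace (LinearMap.range d.toFun) := IsClosed.completeSpace_coe (hs := hrange)
  have hmem : ∀ g : d.graph, (g : A₁ × A₂).2 ∈ LinearMap.range d.toFun := by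
    rintro ⟨g, hg⟩
    obtain ⟨y, -, hy⟩ := (LinearPMap.mem_graph_iff d).1 hg
    exact ⟨y, hy⟩
  let p : d.graph →L[ℝ] LinearMap.range d.toFun :=
    ((ContinuousLinearMap.snd ℝ A₁ A₂).comp d.graph.subtypeL).codRestrict _ hmem
  have hp : Function.Surjective p := by
    rintro ⟨_, u, rfl⟩
    exact ⟨⟨(u, d u), d.mem_graph u⟩, rfl⟩
  -- `⟪z, x⟫` depends only on `d x`, as `z` is orthogonal to the kernel.
  have hwd : ∀ g g' : d.graph, p g = p g' →
      ⟪z, (g : A₁ × A₂).1⟫ = ⟪z, (g' : A₁ × A₂).1⟫ := by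
    intro g g' h
    have h2 : (g : A₁ × A₂).2 = (g' : A₁ × A₂).2 := congrArg Subtype.val h
    have hk : (g : A₁ × A₂).1 - (g' : A₁ × A₂).1 ∈ kerSub d := by
      have := d.graph.sub_mem g.2 g'.2
      have he : (g : A₁ × A₂) - (g' : A₁ × A₂) =
          ((g : A₁ × A₂).1 - (g' : A₁ × A₂).1, 0) :=
        Prod.ext rfl (by simp [h2])
      rw [he] at this
      exact this
    have := (Submodule.mem_orthogonal' _ _).1 hz _ hk
    rwa [inner_sub_right, sub_eq_zero] at this
  obtain ⟨C, -, hC⟩ := p.exists_preimage_norm_le hp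
  obtain ⟨s, hs⟩ := (p : d.graph →ₗ[ℝ] LinearMap.range d.toFun).exists_rightInverse_of_surjective
    (LinearMap.range_eq_top.2 hp)
  have hs' : ∀ y, p (s y) = y := fun y => LinearMap.congr_fun hs y
  -- The algebraic section `s` need not be bounded, but the functional may be evaluated on the
  -- controlled preimages provided by the open mapping theorem instead.
  let φ : StrongDual ℝ (LinearMap.range d.toFun) :=
    LinearMap.mkContinuous
      ((innerₛₗ ℝ z).comp ((LinearMap.fst ℝ A₁ A₂).comp (d.graph.subtype.comp s))) (‖z‖ * C) (by
        intro y
        obtain ⟨g, hg, hgn⟩ := hC y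
        change ‖⟪z, (s y : A₁ × A₂).1⟫‖ ≤ _
        rw [hwd (s y) g (by rw [hs', hg]), mul_assoc]
        refine (norm_inner_le_norm _ _).trans ?_
        gcongr
        exact (norm_fst_le (g : A₁ × A₂)).trans hgn)
  let w : LinearMap.range d.toFun := (InnerProductSpace.toDual ℝ _).symm φ
  have hw : ∀ x : d.domain, ⟪z, (x : A₁)⟫ = ⟪(w : A₂), d x⟫ := by
    intro x
    have h1 : ⟪w, (⟨d x, x, rfl⟩ : LinearMap.range d.toFun)⟫ = φ ⟨d x, x, rfl⟩ :=
      InnerProductSpace.toDual_symm_apply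
    rw [Submodule.coe_inner] at h1
    rw [h1]
    exact hwd ⟨(x, d x), d.mem_graph x⟩ (s ⟨d x, x, rfl⟩) (by rw [hs']; rfl)
  exact ⟨⟨w, LinearPMap.mem_adjoint_domain_of_exists _ ⟨z, hw⟩⟩,
    LinearPMap.adjoint_apply_eq hdense _ hw⟩

lemma adjointRangeSet_eq (d : A₁ →ₗ.[ℝ] A₂)
    (hdense : Dense (d.domain : Set A₁)) (hclosed : d.IsClosed)
    (hrange : IsClosed (rangeSet d)) :
    adjointRangeSet d = ((kerSub d)ᗮ : Submodule ℝ A₁) := by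
  refine Set.Subset.antisymm ?_ fun z hz =>
    mem_adjointRangeSet_of_mem_orthogonal d hdense hclosed hrange hz
  rintro _ ⟨w, rfl⟩
  refine (Submodule.mem_orthogonal' _ _).2 fun x hx => ?_
  obtain ⟨h, h0⟩ := (mem_kerSub d x).1 hx
  have := LinearPMap.adjoint_isFormalAdjoint hdense w ⟨x, h⟩
  rwa [h0, inner_zero_right] at this

lemma harmonicSet_eq (d0 : A₀ →ₗ.[ℝ] A₁) (d1 : A₁ →ₗ.[ℝ] A₂)
    (hd0 : Dense (d0.domain : Set A₀)) :
    harmonicSet d0 d1 = (kerSub d1 ⊓ (LinearMap.range d0.toFun)ᗮ : Submodule ℝ A₁) := by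
  ext v
  exact and_congr (mem_kerSub d1 v).symm (ker_adjoint_iff d0 hd0 v)

/-- The orthogonal decomposition attached to nested closed subspaces `B ≤ K`. -/
lemma existsUnique_decomp (B K : Submodule ℝ A₁) (hB : IsClosed (B : Set A₁))
    (hK : IsClosed (K : Set A₁)) (hBK : B ≤ K) (v : A₁) :
    ∃! t : A₁ × A₁ × A₁, t.1 ∈ B ∧ t.2.1 ∈ K ⊓ Bᗮ ∧ t.2.2 ∈ Kᗮ ∧
      v = t.1 + t.2.1 + t.2.2 := by
  have : CompleteSpace B := IsClosed.completeSpace_coe (hs := hB)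
  have : CompleteSpace K := IsClosed.completeSpace_coe (hs := hK)
  refine ⟨(B.starProjection v, K.starProjection v - B.starProjection v,
    v - K.starProjection v), ⟨B.starProjection_apply_mem v, ⟨?_, ?_⟩, ?_, ?_⟩, ?_⟩
  · exact K.sub_mem (K.starProjection_apply_mem v) (hBK (B.starProjection_apply_mem v))
  · have h1 := B.sub_starProjection_mem_orthogonal v
    have h2 := Submodule.orthogonal_le hBK (K.sub_starProjection_mem_orthogonal v)
    have := Bᗮ.sub_mem h1 h2
    rwa [sub_sub_sub_cancel_left] at this
  · exact K.sub_starProjection_mem_orthogonal v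
  · simp only [add_sub_cancel]
  · rintro ⟨x, y, z⟩ ⟨hx, ⟨hyK, hyB⟩, hz, rfl⟩
    have hPB : B.starProjection (x + y + z) = x :=
      Submodule.eq_starProjection_of_mem_orthogonal hx (by
        rw [add_assoc, add_sub_cancel_left]
        exact Bᗮ.add_mem hyB (Submodule.orthogonal_le hBK hz))
    have hPK : K.starProjection (x + y + z) = x + y :=
      Submodule.eq_starProjection_of_mem_orthogonal (K.add_mem (hBK hx) hyK) (by
        rwa [add_sub_cancel_left])
    simp only [hPB, hPK, add_sub_cancel_left]

/-- The Hodge decomposition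
`A¹ = range d⁰ ⊕ (ker d¹ ∩ ker (d⁰)*) ⊕ range (d¹)*`. -/
theorem hodge_decomposition
    (d0 : A₀ →ₗ.[ℝ] A₁) (d1 : A₁ →ₗ.[ℝ] A₂)
    (hd0dense : Dense (d0.domain : Set A₀)) (hd0closed : d0.IsClosed)
    (hd1dense : Dense (d1.domain : Set A₁)) (hd1closed : d1.IsClosed)
    (hd0range : IsClosed (rangeSet d0))
    (hd1range : IsClosed (Set.range fun u : d1.domain => d1 u))
    (hcomplex : ∀ u : d0.domain, ∃ h : d0 u ∈ d1.domain, d1 ⟨d0 u, h⟩ = 0) :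
    IsClosed (adjointRangeSet d1) ∧
    IsClosed (rangeSet d0) ∧ IsClosed (harmonicSet d0 d1) ∧
    (∀ x ∈ rangeSet d0, ∀ y ∈ harmonicSet d0 d1, ⟪x, y⟫ = 0) ∧
    (∀ x ∈ rangeSet d0, ∀ z ∈ adjointRangeSet d1, ⟪x, z⟫ = 0) ∧
    (∀ y ∈ harmonicSet d0 d1, ∀ z ∈ adjointRangeSet d1, ⟪y, z⟫ = 0) ∧
    (∀ v : A₁, ∃! t : A₁ × A₁ × A₁,
      t.1 ∈ rangeSet d0 ∧ t.2.1 ∈ harmonicSet d0 d1 ∧ t.2.2 ∈ adjointRangeSet d1 ∧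
      v = t.1 + t.2.1 + t.2.2) := by
  have hBK : LinearMap.range d0.toFun ≤ kerSub d1 := by
    rintro _ ⟨u, rfl⟩
    exact (mem_kerSub d1 _).2 (hcomplex u)
  have hK := isClosed_kerSub d1 hd1closed
  rw [adjointRangeSet_eq d1 hd1dense hd1closed hd1range, harmonicSet_eq d0 d1 hd0dense]
  rw [← coe_range_toFun] at hd0range ⊢
  refine ⟨Submodule.isClosed_orthogonal _, hd0range,
    hK.inter (Submodule.isClosed_orthogonal _), ?_, ?_, ?_, ?_⟩
  · exact fun x hx y hy => Submodule.inner_right_of_mem_orthogonal hx hy.2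
  · exact fun x hx z hz => Submodule.inner_right_of_mem_orthogonal (hBK hx) hz
  · exact fun y hy z hz => Submodule.inner_right_of_mem_orthogonal hy.1 hz
  · exact existsUnique_decomp _ _ hd0range hK hBK

end
end

section
/- Let A and A' be real Hilbert spaces and d a densely defined closed operator from A to A' whose range is closed in A'. Then there exists a constant C > 0 such that for every v ∈ dom d orthogonal to ker d one has (‖v‖² + ‖d v‖²)^{1/2} ≤ C ‖d v‖ (the Poincaré inequality in the graph norm for a closed Hilbert complex). -/
open scoped RealInnerProductSpace

/-!
The graph `G` of `d` is a Banach space because `d` is closed, and the range `R` of `d` is a Banach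
space because it is closed. The second projection `G → R` is a continuous linear surjection, so the
open mapping theorem lifts every `d v` to some `(u, d u) ∈ G` with `d u = d v` and
`‖u‖ ≤ C ‖d v‖`. If `v ⟂ ker d`, then `v ⟂ v - u`, hence `‖v‖ ≤ ‖u‖ ≤ C ‖d v‖`, and `C + 1` is a
constant for the graph norm.
-/

/-- The open mapping theorem for closed operators with closed range: every value of `d` has a
preimage of comparable norm. -/
theorem exists_preimage_norm_le_of_closed_range
    {A A' : Type*} [NormedAddCommGroup A] [InnerProductSpace ℝ A] [CompleteSpace A]
    [NormedAddCommGroup A'] [InnerProductSpace ℝ A'] [CompleteSpace A']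
    (d : A →ₗ.[ℝ] A') (hclosed : d.IsClosed)
    (hrange : IsClosed (Set.range fun u : d.domain => d u)) :
    ∃ C : ℝ, 0 < C ∧ ∀ v : d.domain, ∃ u : d.domain, d u = d v ∧ ‖(u : A)‖ ≤ C * ‖d v‖ := by
  have hG : IsClosed (d.graph : Set (A × A')) := hclosed
  have hR : IsClosed (LinearMap.range d.toFun : Set A') := hrange
  have : CompleteSpace d.graph := hG.completeSpace_coe
  have : CompleteSpace (LinearMap.range d.toFun) := hR.completeSpace_coe
  let f : d.graph →L[ℝ] LinearMap.range d.toFun :=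
    ((ContinuousLinearMap.snd ℝ A A').comp d.graph.subtypeL).codRestrict _ (by
      rintro ⟨x, hx⟩
      obtain ⟨y, -, hy⟩ := (LinearPMap.mem_graph_iff d).1 hx
      exact ⟨y, hy⟩)
  have hf : Function.Surjective f := by
    rintro ⟨_, y, rfl⟩
    exact ⟨⟨(y, d y), d.mem_graph y⟩, rfl⟩
  obtain ⟨C, hC, h⟩ := f.exists_preimage_norm_le hf
  refine ⟨C, hC, fun v => ?_⟩
  obtain ⟨⟨x, hx⟩, hxv, hxn⟩ := h ⟨d v, v, rfl⟩
  obtain ⟨u, hu, hdu⟩ := (LinearPMap.mem_graph_iff d).1 hx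
  have hxv' : x.2 = d v := congrArg Subtype.val hxv
  refine ⟨u, hdu.trans hxv', ?_⟩
  rw [hu]
  exact (norm_fst_le x).trans hxn

/-- Poincaré inequality in the graph norm for a densely defined closed operator
with closed range. -/
theorem poincare_inequality_of_closed_range
    {A A' : Type*} [NormedAddCommGroup A] [InnerProductSpace ℝ A] [CompleteSpace A]
    [NormedAddCommGroup A'] [InnerProductSpace ℝ A'] [CompleteSpace A']
    (d : A →ₗ.[ℝ] A') (hdense : Dense (d.domain : Set A)) (hclosed : d.IsClosed)
    (hrange : IsClosed (Set.range fun u : d.domain => d u)) :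
    ∃ C : ℝ, 0 < C ∧ ∀ v : d.domain,
      (∀ y : d.domain, d y = 0 → ⟪(v : A), (y : A)⟫ = 0) →
      Real.sqrt (‖(v : A)‖ ^ 2 + ‖d v‖ ^ 2) ≤ C * ‖d v‖ := by
  obtain ⟨C, hC, h⟩ := exists_preimage_norm_le_of_closed_range d hclosed hrange
  refine ⟨C + 1, by positivity, fun v hv => ?_⟩
  obtain ⟨u, hdu, hun⟩ := h v
  have horth := hv (v - u) (by rw [LinearPMap.map_sub, hdu, sub_self])
  rw [Submodule.coe_sub, inner_sub_right, real_inner_self_eq_norm_sq] at horth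
  have hcs := real_inner_le_norm (v : A) (u : A)
  have hvu : ‖(v : A)‖ ≤ ‖(u : A)‖ := by
    by_contra! hlt
    nlinarith [norm_nonneg (u : A)]
  have hvd : ‖(v : A)‖ ≤ C * ‖d v‖ := hvu.trans hun
  refine Real.sqrt_le_iff.2 ⟨by positivity, ?_⟩
  nlinarith [norm_nonneg (v : A), norm_nonneg (d v), mul_nonneg hC.le (sq_nonneg ‖d v‖),
    pow_le_pow_left₀ (norm_nonneg (v : A)) hvd 2]
end

section
/- Let A^{k-1}, A^k, A^{k+1} be real Hilbert spaces with densely defined closed operators d^{k-1} : A^{k-1} → A^k and d^k : A^k → A^{k+1} of closed range satisfying range d^{k-1} ⊆ ker d^k, and suppose the harmonic space H^k(A) = ker d^k ∩ ker (d^{k-1})* is zero. Let B^{k-1} ⊆ A^{k-1}, B^k ⊆ A^k be closed subspaces with d^{k-1}(B^{k-1} ∩ dom d^{k-1}) ⊆ B^k whose subcomplex harmonic space H^k(B) = { v ∈ ker d^k ∩ B^k : v ⊥ d^{k-1}(B^{k-1} ∩ dom d^{k-1}) } is also zero, admitting graph-norm bounded cochain projections π^{k-1}, π^k, and assume the Poincaré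 inequality ‖z‖_graph ≤ c ‖d^j z‖ for z ∈ dom d^j orthogonal to ker d^j (j = k-1, k). If (u, v) solves the mixed weak formulation of the Hodge–Laplace problem for data f ∈ A^k on the full complex (with vanishing harmonic part) and (u_B, v_B) solves it on the subcomplex, then there exists a constant 𝔠 depending only on c and the bounds of the projections with ‖u - u_B‖_graph + ‖v - v_B‖_graph ≤ 𝔠 ( inf_{û ∈ B^{k-1} ∩ dom d^{k-1}} ‖u - û‖_graph + inf_{v̂ ∈ B^k ∩ dom d^k} ‖v - v̂‖_graph ). -/
/-!
The argument is the stability proof for the mixed formulation, run on the subcomplex.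

Since `H^k(A) = 0` and `range d⁰` is closed, `ker d¹ = range d⁰` (`exact_of_harmonic_zero`).
Fix approximants `uh ∈ B⁰`, `vh ∈ B¹` in the domains and put `a = u - uh`, `b = v - vh`, `p = u_B - uh`,
`q = v_B - vh`.  Write `q = d⁰ y + q'` with `q' ⊥ ker d¹` and `y ⊥ ker d⁰`
(`exists_orthogonal_representative`).  Applying `π¹` and the commutation relation gives
`q = d⁰ w + π¹ q'` with `w = π⁰ y ∈ B⁰`, where the Poincaré inequalities and the bounds of the
projections yield `‖w‖_graph ≤ κ₀ c ‖q‖` and `‖π¹ q'‖ ≤ κ₁ c ‖d¹ q‖`.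

Subtracting the two formulations (Galerkin orthogonality) and testing with `d⁰ p`, with `(p, q)`
and with `w` bounds `‖d⁰ p‖`, `‖p‖² + ‖d¹ q‖²` and `‖q‖` in terms of `a`, `b`
(`stability_bound` is the resulting real inequality).  The triangle inequality and
the infimum over `uh`, `vh` finish the proof, with constant `2K² + 6K + 8`, `K = c (κ₀ + κ₁)`.
-/

open scoped RealInnerProductSpace

/-- Subtracting from `x` its orthogonal projection onto the (closed) kernel of a closed operator
gives the representative of `x` modulo the kernel that is orthogonal to the kernel. -/
lemma exists_orthogonal_representative {E F : Type*}
    [NormedAddCommGroup E] [InnerProductSpace ℝ E] [CompleteSpace E]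
    [NormedAddCommGroup F] [InnerProductSpace ℝ F]
    (d : E →ₗ.[ℝ] F) (hd : d.IsClosed) (x : d.domain) :
    ∃ x' : d.domain, d x' = d x ∧ (∀ y : d.domain, d y = 0 → ⟪(x' : E), (y : E)⟫ = 0) ∧
      ‖(x : E) - x'‖ ≤ ‖(x : E)‖ := by
  let N : Submodule ℝ E := d.graph.comap (LinearMap.inl ℝ E F)
  have hNc : IsClosed (N : Set E) := by
    have : IsClosed (d.graph : Set (E × F)) := hd
    exact this.preimage (by fun_prop : Continuous fun z : E => (z, (0 : F)))
  have hmem : ∀ z : E, z ∈ N ↔ ∃ y : d.domain, (y : E) = z ∧ d y = 0 := by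
    intro z
    change (z, (0 : F)) ∈ d.graph ↔ _
    rw [LinearPMap.mem_graph_iff]
  have : CompleteSpace N := hNc.completeSpace_coe
  obtain ⟨y, hy, hy0⟩ := (hmem _).1 (N.starProjection_apply_mem (x : E))
  refine ⟨x - y, ?_, ?_, ?_⟩
  · rw [LinearPMap.map_sub, hy0, sub_zero]
  · intro z hz
    have h1 : (x : E) - N.starProjection (x : E) ∈ Nᗮ := N.sub_starProjection_mem_orthogonal _
    rw [← hy] at h1
    have := (Submodule.mem_orthogonal' _ _).1 h1 z ((hmem _).2 ⟨z, rfl, hz⟩)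
    simpa using this
  · have h2 : (x : E) - ((x - y : d.domain) : E) = N.starProjection (x : E) := by
      rw [← hy]; simp
    rw [h2]
    exact N.norm_starProjection_apply_le _

/-- If there are no harmonic elements, closedness of `range d0` makes the complex exact. -/
lemma exact_of_harmonic_zero {E F G : Type*}
    [NormedAddCommGroup E] [InnerProductSpace ℝ E] [CompleteSpace E]
    [NormedAddCommGroup F] [InnerProductSpace ℝ F] [CompleteSpace F]
    [NormedAddCommGroup G] [InnerProductSpace ℝ G]
    (d0 : E →ₗ.[ℝ] F) (d1 : F →ₗ.[ℝ] G) (hdense : Dense (d0.domain : Set E))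
    (hrange : IsClosed (Set.range fun x : d0.domain => d0 x))
    (hcomplex : ∀ x : d0.domain, ∃ hm : d0 x ∈ d1.domain, d1 ⟨d0 x, hm⟩ = 0)
    (hharm : ∀ w : F, (∃ hm : w ∈ d1.domain, d1 ⟨w, hm⟩ = 0) →
      (∃ hm : w ∈ d0.adjoint.domain, d0.adjoint ⟨w, hm⟩ = 0) → w = 0)
    (w : d1.domain) (hw : d1 w = 0) : ∃ y : d0.domain, d0 y = w := by
  let R : Submodule ℝ F := LinearMap.range d0.toFun
  have hRc : IsClosed (R : Set F) := hrange
  have : CompleteSpace R := hRc.completeSpace_coe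
  obtain ⟨y, hy⟩ : ∃ y : d0.domain, d0 y = R.starProjection (w : F) :=
    R.starProjection_apply_mem (w : F)
  have horth : ∀ x : d0.domain, ⟪(w : F) - d0 y, d0 x⟫ = 0 := by
    intro x
    have h1 : (w : F) - R.starProjection (w : F) ∈ Rᗮ := R.sub_starProjection_mem_orthogonal _
    rw [← hy] at h1
    exact (Submodule.mem_orthogonal' _ _).1 h1 _ ⟨x, rfl⟩
  obtain ⟨hm, hm0⟩ := hcomplex y
  have hadj : (w : F) - d0 y ∈ d0.adjoint.domain :=
    LinearPMap.mem_adjoint_domain_of_exists _ ⟨0, fun x => by rw [horth x, inner_zero_left]⟩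
  refine ⟨y, (sub_eq_zero.1 (hharm ((w : F) - d0 y) ⟨d1.domain.sub_mem w.2 hm, ?_⟩
    ⟨hadj, ?_⟩)).symm⟩
  · have := d1.map_sub w ⟨d0 y, hm⟩
    rw [hw, hm0, sub_zero] at this
    exact this
  · exact LinearPMap.adjoint_apply_eq hdense _ fun x => by
      rw [inner_zero_left]; exact (horth x).symm

lemma sqrt_sq_add_sq_le {x y : ℝ} (hx : 0 ≤ x) (hy : 0 ≤ y) : √(x ^ 2 + y ^ 2) ≤ x + y :=
  Real.sqrt_le_iff.2 ⟨by positivity, by nlinarith [mul_nonneg hx hy]⟩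

lemma left_le_sqrt_sq_add_sq (x y : ℝ) : x ≤ √(x ^ 2 + y ^ 2) :=
  Real.le_sqrt_of_sq_le (by nlinarith [sq_nonneg y])

lemma right_le_sqrt_sq_add_sq (x y : ℝ) : y ≤ √(x ^ 2 + y ^ 2) :=
  Real.le_sqrt_of_sq_le (by nlinarith [sq_nonneg x])

/-- The real inequality behind stability: `P = ‖p‖`, `D = ‖d¹ q‖`, `Q = ‖q‖`, and `s` is the
approximation error.  The first hypothesis comes from testing with `(p, q)`, the second from
testing with a potential of the kernel part of `q`. -/
lemma stability_bound {P D Q s K : ℝ} (hs : 0 ≤ s) (hK : 0 ≤ K)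
    (h1 : P ^ 2 + D ^ 2 ≤ s * P + s ^ 2 + s * Q + s * D) (h2 : Q ≤ K * (P + D + s)) :
    P + D + Q ≤ (2 * K ^ 2 + 6 * K + 3) * s := by
  have hX : P + D ≤ (2 * K + 3) * s := by
    have h3 : (P + D) ^ 2 ≤ 2 * (1 + K) * s * ((P + D) + s) := by
      nlinarith [mul_le_mul_of_nonneg_left h2 hs, sq_nonneg (P - D)]
    by_contra! hlt
    have h4 : 0 ≤ K * s := mul_nonneg hK hs
    have h5 : 0 ≤ K * s * s := mul_nonneg h4 hs
    have h6 : 0 < (P + D) * (P + D - (2 * K + 3) * s) :=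
      mul_pos (by nlinarith) (by linarith)
    have h7 : 0 ≤ s * (P + D - (2 * K + 3) * s) := mul_nonneg hs (by linarith)
    nlinarith [mul_nonneg hs hs]
  nlinarith [mul_le_mul_of_nonneg_left hX hK]

/-- a priori error estimate for the mixed Hodge–Laplace problem over a
subcomplex admitting graph-norm bounded cochain projections, in the case of vanishing
harmonic spaces.  The constant `𝔠` depends only on the Poincaré constant `c` and on the
graph-norm bounds `κ₀, κ₁` of the cochain projections. -/
theorem a_priori_error_estimate_trivial_harmonics :
    ∃ 𝔠 : ℝ → ℝ → ℝ → ℝ,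
      ∀ (A₀ A₁ A₂ : Type)
        [NormedAddCommGroup A₀] [InnerProductSpace ℝ A₀] [CompleteSpace A₀]
        [NormedAddCommGroup A₁] [InnerProductSpace ℝ A₁] [CompleteSpace A₁]
        [NormedAddCommGroup A₂] [InnerProductSpace ℝ A₂] [CompleteSpace A₂]
        (d0 : A₀ →ₗ.[ℝ] A₁) (d1 : A₁ →ₗ.[ℝ] A₂),
        Dense (d0.domain : Set A₀) → d0.IsClosed →
        Dense (d1.domain : Set A₁) → d1.IsClosed →
        IsClosed (Set.range fun x : d0.domain => d0 x) →
        IsClosed (Set.range fun x : d1.domain => d1 x) →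
        -- complex property: range d⁰ ⊆ ker d¹
        (∀ x : d0.domain, ∃ hm : d0 x ∈ d1.domain, d1 ⟨d0 x, hm⟩ = 0) →
        -- the harmonic space H^k(A) = ker d¹ ∩ ker (d⁰)* is zero
        (∀ w : A₁, (∃ hm : w ∈ d1.domain, d1 ⟨w, hm⟩ = 0) →
          (∃ hm : w ∈ d0.adjoint.domain, d0.adjoint ⟨w, hm⟩ = 0) → w = 0) →
        ∀ (B₀ : Submodule ℝ A₀) (B₁ : Submodule ℝ A₁),
        IsClosed (B₀ : Set A₀) → IsClosed (B₁ : Set A₁) →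
        -- subcomplex property
        (∀ x : d0.domain, (x : A₀) ∈ B₀ → d0 x ∈ B₁) →
        -- the subcomplex harmonic space H^k(B) is zero
        (∀ w : A₁, w ∈ B₁ → (∃ hm : w ∈ d1.domain, d1 ⟨w, hm⟩ = 0) →
          (∀ x : d0.domain, (x : A₀) ∈ B₀ → ⟪w, d0 x⟫ = 0) → w = 0) →
        ∀ c κ₀ κ₁ : ℝ, 0 < c → 0 ≤ κ₀ → 0 ≤ κ₁ →
        -- Poincaré inequalities in the graph norm at the two levels
        (∀ z : d0.domain, (∀ y : d0.domain, d0 y = 0 → ⟪(z : A₀), (y : A₀)⟫ = 0) →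
          Real.sqrt (‖(z : A₀)‖ ^ 2 + ‖d0 z‖ ^ 2) ≤ c * ‖d0 z‖) →
        (∀ z : d1.domain, (∀ y : d1.domain, d1 y = 0 → ⟪(z : A₁), (y : A₁)⟫ = 0) →
          Real.sqrt (‖(z : A₁)‖ ^ 2 + ‖d1 z‖ ^ 2) ≤ c * ‖d1 z‖) →
        -- graph-norm bounded cochain projections π⁰, π¹ onto the subcomplex
        ∀ (π0 : d0.domain →ₗ[ℝ] A₀) (π1 : d1.domain →ₗ[ℝ] A₁),
        (∀ x : d0.domain, π0 x ∈ B₀ ∧ π0 x ∈ d0.domain) →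
        (∀ x : d1.domain, π1 x ∈ B₁ ∧ π1 x ∈ d1.domain) →
        (∀ x : d0.domain, (x : A₀) ∈ B₀ → π0 x = x) →
        (∀ x : d1.domain, (x : A₁) ∈ B₁ → π1 x = x) →
        (∀ (x : d0.domain) (h₁ : π0 x ∈ d0.domain) (h₂ : d0 x ∈ d1.domain),
          d0 ⟨π0 x, h₁⟩ = π1 ⟨d0 x, h₂⟩) →
        (∀ (x : d0.domain) (h₁ : π0 x ∈ d0.domain),
          Real.sqrt (‖π0 x‖ ^ 2 + ‖d0 ⟨π0 x, h₁⟩‖ ^ 2) ≤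
            κ₀ * Real.sqrt (‖(x : A₀)‖ ^ 2 + ‖d0 x‖ ^ 2)) →
        (∀ (x : d1.domain) (h₁ : π1 x ∈ d1.domain),
          Real.sqrt (‖π1 x‖ ^ 2 + ‖d1 ⟨π1 x, h₁⟩‖ ^ 2) ≤
            κ₁ * Real.sqrt (‖(x : A₁)‖ ^ 2 + ‖d1 x‖ ^ 2)) →
        ∀ f : A₁,
        -- (u, v) solves the mixed weak formulation on the full complex
        ∀ (u : d0.domain) (v : d1.domain),
        (∀ u' : d0.domain, ⟪(u : A₀), (u' : A₀)⟫ - ⟪(v : A₁), d0 u'⟫ = 0) →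
        (∀ v' : d1.domain, ⟪d0 u, (v' : A₁)⟫ + ⟪d1 v, d1 v'⟫ = ⟪f, (v' : A₁)⟫) →
        -- (u_B, v_B) solves the mixed weak formulation on the subcomplex
        ∀ (uB : d0.domain) (vB : d1.domain),
        (uB : A₀) ∈ B₀ → (vB : A₁) ∈ B₁ →
        (∀ u' : d0.domain, (u' : A₀) ∈ B₀ →
          ⟪(uB : A₀), (u' : A₀)⟫ - ⟪(vB : A₁), d0 u'⟫ = 0) →
        (∀ v' : d1.domain, (v' : A₁) ∈ B₁ →
          ⟪d0 uB, (v' : A₁)⟫ + ⟪d1 vB, d1 v'⟫ = ⟪f, (v' : A₁)⟫) →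
        Real.sqrt (‖((u : A₀) - (uB : A₀))‖ ^ 2 + ‖d0 (u - uB)‖ ^ 2) +
            Real.sqrt (‖((v : A₁) - (vB : A₁))‖ ^ 2 + ‖d1 (v - vB)‖ ^ 2) ≤
          𝔠 c κ₀ κ₁ *
            (sInf {r : ℝ | ∃ uhat : d0.domain, (uhat : A₀) ∈ B₀ ∧
                r = Real.sqrt (‖((u : A₀) - (uhat : A₀))‖ ^ 2 + ‖d0 (u - uhat)‖ ^ 2)} +
              sInf {r : ℝ | ∃ vhat : d1.domain, (vhat : A₁) ∈ B₁ ∧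
                r = Real.sqrt (‖((v : A₁) - (vhat : A₁))‖ ^ 2 + ‖d1 (v - vhat)‖ ^ 2)}) := by
  refine ⟨fun c κ₀ κ₁ => 2 * (c * (κ₀ + κ₁)) ^ 2 + 6 * (c * (κ₀ + κ₁)) + 8, ?_⟩
  intro A₀ A₁ A₂ _ _ _ _ _ _ _ _ _ d0 d1 hdense0 hclosed0 _ hclosed1 hrange0 _ hcomplex hharm
    B₀ B₁ _ _ hsub _ c κ₀ κ₁ hc hκ₀ hκ₁ hP0 hP1 π0 π1 hπ0 hπ1 _ hπ1id hcomm hb0 hb1 f u v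
    hu hv uB vB huB hvB hu' hv'
  set K : ℝ := c * (κ₀ + κ₁) with hKdef
  have hK : 0 ≤ K := by positivity
  set C : ℝ := 2 * K ^ 2 + 6 * K + 8 with hCdef
  have hC : 0 < C := by positivity
  have main : ∀ (uh : d0.domain) (vh : d1.domain), (uh : A₀) ∈ B₀ → (vh : A₁) ∈ B₁ →
      √(‖((u : A₀) - (uB : A₀))‖ ^ 2 + ‖d0 (u - uB)‖ ^ 2) +
        √(‖((v : A₁) - (vB : A₁))‖ ^ 2 + ‖d1 (v - vB)‖ ^ 2) ≤
      C * (√(‖((u : A₀) - (uh : A₀))‖ ^ 2 + ‖d0 (u - uh)‖ ^ 2) +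
        √(‖((v : A₁) - (vh : A₁))‖ ^ 2 + ‖d1 (v - vh)‖ ^ 2)) := by
    intro uh vh huh hvh
    obtain ⟨a, ha⟩ : ∃ a : d0.domain, a = u - uh := ⟨_, rfl⟩
    obtain ⟨b, hb⟩ : ∃ b : d1.domain, b = v - vh := ⟨_, rfl⟩
    obtain ⟨p, hp⟩ : ∃ p : d0.domain, p = uB - uh := ⟨_, rfl⟩
    obtain ⟨q, hq⟩ : ∃ q : d1.domain, q = vB - vh := ⟨_, rfl⟩
    have hpB : (p : A₀) ∈ B₀ := by rw [hp]; exact B₀.sub_mem huB huh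
    have hqB : (q : A₁) ∈ B₁ := by rw [hq]; exact B₁.sub_mem hvB hvh
    have ea : (u : A₀) - uh = a := by rw [ha]; rfl
    have eb : (v : A₁) - vh = b := by rw [hb]; rfl
    have hap : u - uB = a - p := by rw [ha, hp]; abel
    have hbq : v - vB = b - q := by rw [hb, hq]; abel
    have eap : (u : A₀) - uB = a - p := congrArg Subtype.val hap
    have ebq : (v : A₁) - vB = b - q := congrArg Subtype.val hbq
    -- Galerkin orthogonality of the errors `u - u_B = a - p` and `v - v_B = b - q`.
    have G0 : ∀ x : d0.domain, (x : A₀) ∈ B₀ →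
        ⟪(p : A₀), (x : A₀)⟫ - ⟪(q : A₁), d0 x⟫ = ⟪(a : A₀), (x : A₀)⟫ - ⟪(b : A₁), d0 x⟫ := by
      intro x hx
      have h1 := hu x
      have h2 := hu' x hx
      have h3 : ⟪(u : A₀) - uB, (x : A₀)⟫ - ⟪(v : A₁) - vB, d0 x⟫ = 0 := by
        rw [inner_sub_left, inner_sub_left]; linarith
      rw [eap, ebq, inner_sub_left, inner_sub_left] at h3
      linarith
    have G1 : ∀ x : d1.domain, (x : A₁) ∈ B₁ →
        ⟪d0 p, (x : A₁)⟫ + ⟪d1 q, d1 x⟫ = ⟪d0 a, (x : A₁)⟫ + ⟪d1 b, d1 x⟫ := by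
      intro x hx
      have h1 := hv x
      have h2 := hv' x hx
      have h3 : ⟪d0 (u - uB), (x : A₁)⟫ + ⟪d1 (v - vB), d1 x⟫ = 0 := by
        rw [d0.map_sub, d1.map_sub, inner_sub_left, inner_sub_left]; linarith
      rw [hap, hbq, d0.map_sub, d1.map_sub, inner_sub_left, inner_sub_left] at h3
      linarith
    rw [eap, ebq, hap, hbq, ea, eb, ← ha, ← hb, d0.map_sub, d1.map_sub]
    -- The decomposition `q = d⁰ w + π¹ q'`.
    obtain ⟨q', hq'd, hq'o, hq'n⟩ := exists_orthogonal_representative d1 hclosed1 q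
    obtain ⟨y₀, hy₀⟩ := exact_of_harmonic_zero d0 d1 hdense0 hrange0 hcomplex hharm (q - q')
      (by rw [d1.map_sub, hq'd, sub_self])
    obtain ⟨y, hyd, hyo, -⟩ := exists_orthogonal_representative d0 hclosed0 y₀
    have hdy : d0 y = (q : A₁) - q' := hyd.trans hy₀
    have hwm := (hπ0 y).2
    obtain ⟨w, hw⟩ : ∃ w : d0.domain, w = ⟨π0 y, hwm⟩ := ⟨_, rfl⟩
    have hwB : (w : A₀) ∈ B₀ := by rw [hw]; exact (hπ0 y).1
    have hdec : (q : A₁) = d0 w + π1 q' := by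
      obtain ⟨hm, -⟩ := hcomplex y
      have h1 : (⟨d0 y, hm⟩ : d1.domain) = q - q' := Subtype.ext hdy
      rw [hw, hcomm y hwm hm, h1, map_sub, hπ1id q hqB]
      abel
    have hwg : √(‖(w : A₀)‖ ^ 2 + ‖d0 w‖ ^ 2) ≤ κ₀ * c * ‖(q : A₁)‖ := by
      have h1 := hb0 y hwm
      have h2 := hP0 y hyo
      rw [← hdy] at hq'n
      rw [hw]
      calc _ ≤ _ := h1
        _ ≤ κ₀ * (c * ‖(q : A₁)‖) := by gcongr; exact h2.trans (by gcongr)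
        _ = _ := by ring
    have hwn := (left_le_sqrt_sq_add_sq ‖(w : A₀)‖ ‖d0 w‖).trans hwg
    have hdwn := (right_le_sqrt_sq_add_sq ‖(w : A₀)‖ ‖d0 w‖).trans hwg
    have hπq : ‖π1 q'‖ ≤ κ₁ * c * ‖d1 q‖ := by
      have h1 := hb1 q' (hπ1 q').2
      have h2 := hP1 q' hq'o
      rw [hq'd] at h2 h1
      calc _ ≤ _ := left_le_sqrt_sq_add_sq _ _
        _ ≤ _ := h1
        _ ≤ κ₁ * (c * ‖d1 q‖) := by gcongr
        _ = _ := by ring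
    have hα := left_le_sqrt_sq_add_sq ‖(a : A₀)‖ ‖d0 a‖
    have hα' := right_le_sqrt_sq_add_sq ‖(a : A₀)‖ ‖d0 a‖
    have hβ := left_le_sqrt_sq_add_sq ‖(b : A₁)‖ ‖d1 b‖
    have hβ' := right_le_sqrt_sq_add_sq ‖(b : A₁)‖ ‖d1 b‖
    set α := √(‖(a : A₀)‖ ^ 2 + ‖d0 a‖ ^ 2)
    set β := √(‖(b : A₁)‖ ^ 2 + ‖d1 b‖ ^ 2)
    have hα0 : 0 ≤ α := Real.sqrt_nonneg _
    have hβ0 : 0 ≤ β := Real.sqrt_nonneg _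
    -- Testing with `d⁰ p ∈ ker d¹`.
    have hdp : ‖d0 p‖ ≤ ‖d0 a‖ := by
      obtain ⟨hm, hm0⟩ := hcomplex p
      have h1 := G1 ⟨d0 p, hm⟩ (hsub p hpB)
      simp only [hm0, inner_zero_right, add_zero, real_inner_self_eq_norm_sq] at h1
      have h2 := real_inner_le_norm (d0 a) (d0 p)
      by_contra! hlt
      nlinarith [norm_nonneg (d0 a)]
    -- Testing with `(p, q)`.
    have hen : ‖(p : A₀)‖ ^ 2 + ‖d1 q‖ ^ 2 ≤
        (α + β) * ‖(p : A₀)‖ + (α + β) ^ 2 + (α + β) * ‖(q : A₁)‖ + (α + β) * ‖d1 q‖ := by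
      have h1 := G0 p hpB
      have h2 := G1 q hqB
      rw [real_inner_self_eq_norm_sq] at h1 h2
      rw [real_inner_comm] at h2
      have i1 : ⟪(a : A₀), (p : A₀)⟫ ≤ (α + β) * ‖(p : A₀)‖ :=
        (real_inner_le_norm _ _).trans (by gcongr; linarith)
      have i2 : -⟪(b : A₁), d0 p⟫ ≤ (α + β) ^ 2 := by
        rw [← inner_neg_left]
        refine (real_inner_le_norm _ _).trans ?_
        rw [norm_neg, sq]
        gcongr <;> linarith
      have i3 : ⟪d0 a, (q : A₁)⟫ ≤ (α + β) * ‖(q : A₁)‖ :=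
        (real_inner_le_norm _ _).trans (by gcongr; linarith)
      have i4 : ⟪d1 b, d1 q⟫ ≤ (α + β) * ‖d1 q‖ :=
        (real_inner_le_norm _ _).trans (by gcongr; linarith)
      linarith
    -- Testing with `w`.
    have hqn : ‖(q : A₁)‖ ≤ K * (‖(p : A₀)‖ + ‖d1 q‖ + (α + β)) := by
      have h1 := G0 w hwB
      have h2 : ‖(q : A₁)‖ ^ 2 = ⟪(q : A₁), d0 w⟫ + ⟪(q : A₁), π1 q'⟫ := by
        rw [← inner_add_right, ← hdec, real_inner_self_eq_norm_sq]
      have i1 : ⟪(p : A₀), (w : A₀)⟫ ≤ ‖(p : A₀)‖ * (κ₀ * c * ‖(q : A₁)‖) :=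
        (real_inner_le_norm _ _).trans (by gcongr)
      have i2 : -⟪(a : A₀), (w : A₀)⟫ ≤ α * (κ₀ * c * ‖(q : A₁)‖) := by
        rw [← inner_neg_left]
        refine (real_inner_le_norm _ _).trans ?_
        rw [norm_neg]; gcongr
      have i3 : ⟪(b : A₁), d0 w⟫ ≤ β * (κ₀ * c * ‖(q : A₁)‖) :=
        (real_inner_le_norm _ _).trans (by gcongr)
      have i4 : ⟪(q : A₁), π1 q'⟫ ≤ ‖(q : A₁)‖ * (κ₁ * c * ‖d1 q‖) :=
        (real_inner_le_norm _ _).trans (by gcongr)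
      have h3 : ‖(q : A₁)‖ * ‖(q : A₁)‖ ≤
          ‖(q : A₁)‖ * (κ₀ * c * (‖(p : A₀)‖ + α + β) + κ₁ * c * ‖d1 q‖) := by
        linarith
      have h4 : κ₀ * c * (‖(p : A₀)‖ + α + β) + κ₁ * c * ‖d1 q‖ ≤
          K * (‖(p : A₀)‖ + ‖d1 q‖ + (α + β)) := by
        have j1 : 0 ≤ κ₀ * c * ‖d1 q‖ := by positivity
        have j2 : 0 ≤ κ₁ * c * (‖(p : A₀)‖ + α + β) := by positivity
        rw [hKdef]; linarith
      rcases (norm_nonneg (q : A₁)).eq_or_lt with h0 | h0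
      · rw [← h0]; positivity
      · exact (le_of_mul_le_mul_left h3 h0).trans h4
    have hfin := stability_bound (add_nonneg hα0 hβ0) hK hen hqn
    have t1 := sqrt_sq_add_sq_le (norm_nonneg ((a : A₀) - p)) (norm_nonneg (d0 a - d0 p))
    have t2 := sqrt_sq_add_sq_le (norm_nonneg ((b : A₁) - q)) (norm_nonneg (d1 b - d1 q))
    have t3 := norm_sub_le (a : A₀) p
    have t4 := norm_sub_le (d0 a) (d0 p)
    have t5 := norm_sub_le (b : A₁) q
    have t6 := norm_sub_le (d1 b) (d1 q)
    have : C * (α + β) = (2 * K ^ 2 + 6 * K + 3) * (α + β) + 5 * (α + β) := by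
      rw [hCdef]; ring
    linarith
  -- Passing to the infima one at a time; both sets contain the value at `0`.
  set L := √(‖((u : A₀) - (uB : A₀))‖ ^ 2 + ‖d0 (u - uB)‖ ^ 2) +
        √(‖((v : A₁) - (vB : A₁))‖ ^ 2 + ‖d1 (v - vB)‖ ^ 2)
  change L ≤ C * _
  rw [← div_le_iff₀' hC, ← sub_le_iff_le_add]
  refine le_csInf ⟨_, 0, B₀.zero_mem, rfl⟩ ?_
  rintro _ ⟨uh, huh, rfl⟩
  rw [sub_le_comm]
  refine le_csInf ⟨_, 0, B₁.zero_mem, rfl⟩ ?_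
  rintro _ ⟨vh, hvh, rfl⟩
  rw [sub_le_iff_le_add', div_le_iff₀' hC]
  exact main uh vh huh hvh
end

section
/- Let A and A' be real Hilbert spaces and d a densely defined closed operator from A to A' with closed range, with adjoint d*, and let c > 0 satisfy the two Poincaré inequalities ‖z‖ ≤ c ‖d z‖ for every z ∈ dom d orthogonal to ker d and ‖y‖ ≤ c ‖d* y‖ for every y ∈ dom d* orthogonal to ker d*. Suppose u ∈ dom d satisfies u ⊥ ker d, d u ∈ dom d*, and d*(d u) = f. Then for every u_E ∈ dom d with d u_E ∈ dom d*, the component of the error orthogonal to ker d satisfies the a posteriori bound ‖P(u - u_E)‖ ≤ c² ‖d*(d u_E) - f‖, where P is the orthogonal projection of A onto the orthogonal complement of ker d. -/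
/-!
The projection `e` differs from `u - u_E` by an element of `ker d`, so `e ∈ dom d` and
`d e = d u - d u_E`, which lies in `dom d*` with `d* (d e) = f - d* (d u_E)`. Since `e ⊥ ker d`, the
Poincaré inequality for `d` gives `‖e‖ ≤ c ‖d e‖`; since `d e` lies in the range of `d`, it is
orthogonal to `ker d*`, and the Poincaré inequality for `d*` gives `‖d e‖ ≤ c ‖d* (d e)‖`.
-/

open scoped RealInnerProductSpace

/-- A posteriori bound for the component of the error orthogonal to the kernel:
if `d*(d u) = f` with `u ⊥ ker d`, then for any approximation `u_E` the projection `e` of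
`u - u_E` onto `(ker d)ᗮ` satisfies `‖e‖ ≤ c² ‖d*(d u_E) - f‖`. -/
theorem aposteriori_bound_orthogonal_component
    {A A' : Type*} [NormedAddCommGroup A] [InnerProductSpace ℝ A] [CompleteSpace A]
    [NormedAddCommGroup A'] [InnerProductSpace ℝ A'] [CompleteSpace A']
    (d : A →ₗ.[ℝ] A') (hdense : Dense (d.domain : Set A)) (hclosed : d.IsClosed)
    (hrange : IsClosed (Set.range fun x : d.domain => d x))
    (c : ℝ) (hc : 0 < c)
    (hpoincare : ∀ z : d.domain,
      (∀ y : d.domain, d y = 0 → ⟪(z : A), (y : A)⟫ = 0) → ‖(z : A)‖ ≤ c * ‖d z‖)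
    (hpoincare' : ∀ z : d.adjoint.domain,
      (∀ y : d.adjoint.domain, d.adjoint y = 0 → ⟪(z : A'), (y : A')⟫ = 0) →
      ‖(z : A')‖ ≤ c * ‖d.adjoint z‖)
    (u : d.domain)
    (hu : ∀ y : d.domain, d y = 0 → ⟪(u : A), (y : A)⟫ = 0)
    (hdu : d u ∈ d.adjoint.domain)
    (f : A) (hf : d.adjoint ⟨d u, hdu⟩ = f) :
    ∀ (uE : d.domain) (hduE : d uE ∈ d.adjoint.domain) (e : A),
      -- `e` is the orthogonal projection of `u - u_E` onto the orthogonal complement of `ker d`: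
      (∀ y : d.domain, d y = 0 → ⟪e, (y : A)⟫ = 0) →
      (∃ hm : (u : A) - (uE : A) - e ∈ d.domain, d ⟨(u : A) - (uE : A) - e, hm⟩ = 0) →
      ‖e‖ ≤ c ^ 2 * ‖d.adjoint ⟨d uE, hduE⟩ - f‖ := by
  intro uE hduE e he ⟨hm, hk⟩
  have he_eq : e = ((u - uE : d.domain) : A) - ((u : A) - uE - e) := by
    simp
  have he_mem : e ∈ d.domain := by
    rw [he_eq]
    exact d.domain.sub_mem (u - uE).2 hm
  have hde : d ⟨e, he_mem⟩ = d u - d uE := by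
    have h : (⟨e, he_mem⟩ : d.domain) = u - uE - ⟨(u : A) - uE - e, hm⟩ :=
      Subtype.ext he_eq
    rw [h, d.map_sub, hk, sub_zero, d.map_sub]
  let z : d.adjoint.domain := ⟨d u, hdu⟩ - ⟨d uE, hduE⟩
  have hz : (z : A') = d ⟨e, he_mem⟩ := hde.symm
  have hadj : ‖d.adjoint z‖ = ‖d.adjoint ⟨d uE, hduE⟩ - f‖ := by
    rw [d.adjoint.map_sub, hf, norm_sub_rev]
  have h1 : ‖e‖ ≤ c * ‖d ⟨e, he_mem⟩‖ := hpoincare ⟨e, he_mem⟩ he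
  have h2 : ‖(z : A')‖ ≤ c * ‖d.adjoint z‖ := by
    refine hpoincare' z fun y hy => ?_
    -- The range of `d` is orthogonal to the kernel of the adjoint.
    have h := LinearPMap.adjoint_isFormalAdjoint hdense y ⟨e, he_mem⟩
    rw [hy, inner_zero_left] at h
    rw [hz, real_inner_comm]
    exact h.symm
  rw [hz, hadj] at h2
  calc ‖e‖ ≤ c * ‖d ⟨e, he_mem⟩‖ := h1
    _ ≤ c * (c * ‖d.adjoint ⟨d uE, hduE⟩ - f‖) := by gcongr
    _ = c ^ 2 * ‖d.adjoint ⟨d uE, hduE⟩ - f‖ := by ring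
end

section
/- Let A^0, A^1, A^2 be real Hilbert spaces and d^0 : A^0 → A^1, d^1 : A^1 → A^2 densely defined closed operators with closed range such that range d^0 ⊆ ker d^1 and range (d^1)* ⊆ ker (d^0)*, and let c > 0 satisfy the Poincaré inequality ‖y‖ ≤ c ‖(d^0)* y‖ for every y ∈ dom (d^0)* orthogonal to ker (d^0)*. Suppose v ∈ range d^0 with v ∈ dom (d^0)* and (d^0)* v = f. Then for every v_E ∈ dom (d^0)*, the range-component of the error satisfies the a posteriori bound ‖P_𝔅(v - v_E)‖ ≤ c ‖(d^0)* v_E - f‖, where P_𝔅 is the orthogonal projection of A^1 onto range d^0. -/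
/-!
Let `e` be the orthogonal projection of `v - v_E` onto `range d⁰`. Since `v - v_E - e` is orthogonal
to `range d⁰`, it lies in `ker (d⁰)*`; hence `e ∈ dom (d⁰)*` and `(d⁰)* e = f - (d⁰)* v_E`. As an
element of `range d⁰`, `e` is orthogonal to `ker (d⁰)*`, so the Poincaré inequality applies to `e`
and gives the bound.
-/

open scoped RealInnerProductSpace

section

variable {A₀ A₁ A₂ : Type*}
  [NormedAddCommGroup A₀] [InnerProductSpace ℝ A₀] [CompleteSpace A₀]
  [NormedAddCommGroup A₁] [InnerProductSpace ℝ A₁] [CompleteSpace A₁]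
  [NormedAddCommGroup A₂] [InnerProductSpace ℝ A₂] [CompleteSpace A₂]

/-- A posteriori bound for the range-component of the error: if `v ∈ range d⁰`
solves `(d⁰)* v = f`, then for any `v_E ∈ dom (d⁰)*` the orthogonal projection `e` of `v - v_E`
onto `range d⁰` satisfies `‖e‖ ≤ c ‖(d⁰)* v_E - f‖`. -/
theorem aposteriori_bound_range_component
    (d0 : A₀ →ₗ.[ℝ] A₁) (d1 : A₁ →ₗ.[ℝ] A₂)
    (hd0dense : Dense (d0.domain : Set A₀)) (hd0closed : d0.IsClosed)
    (hd1dense : Dense (d1.domain : Set A₁)) (hd1closed : d1.IsClosed)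
    (hd0range : IsClosed (rangeSet d0))
    (hd1range : IsClosed (Set.range fun u : d1.domain => d1 u))
    (hcomplex : ∀ u : d0.domain, ∃ h : d0 u ∈ d1.domain, d1 ⟨d0 u, h⟩ = 0)
    (hcomplex' : ∀ w : d1.adjoint.domain,
      ∃ h : d1.adjoint w ∈ d0.adjoint.domain, d0.adjoint ⟨d1.adjoint w, h⟩ = 0)
    (c : ℝ) (hc : 0 < c)
    (hpoincare : ∀ y : d0.adjoint.domain,
      (∀ z : d0.adjoint.domain, d0.adjoint z = 0 → ⟪(y : A₁), (z : A₁)⟫ = 0) →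
      ‖(y : A₁)‖ ≤ c * ‖d0.adjoint y‖)
    (v : A₁) (hv : v ∈ rangeSet d0)
    (hvdom : v ∈ d0.adjoint.domain)
    (f : A₀) (hf : d0.adjoint ⟨v, hvdom⟩ = f) :
    ∀ (vE : A₁) (hvE : vE ∈ d0.adjoint.domain) (e : A₁),
      -- `e` is the orthogonal projection of `v - v_E` onto `range d⁰`:
      e ∈ rangeSet d0 →
      (∀ w ∈ rangeSet d0, ⟪v - vE - e, w⟫ = 0) →
      ‖e‖ ≤ c * ‖d0.adjoint ⟨vE, hvE⟩ - f‖ := by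
  intro vE hvE e he horth
  have hadj := d0.adjoint_isFormalAdjoint hd0dense
  -- `v - vE - e` is orthogonal to `range d⁰`, so `e` and `v - vE` pair equally with every `d⁰ u`.
  have key : ∀ u : d0.domain, ⟪f - d0.adjoint ⟨vE, hvE⟩, (u : A₀)⟫ = ⟪e, d0 u⟫ := by
    intro u
    have h1 := hadj ⟨v, hvdom⟩ u
    have h2 := hadj ⟨vE, hvE⟩ u
    have h3 := horth (d0 u) ⟨u, rfl⟩
    rw [hf] at h1
    simp only [inner_sub_left] at h3 ⊢
    simp only at h1 h2
    linarith
  have hedom : e ∈ d0.adjoint.domain := d0.mem_adjoint_domain_of_exists e ⟨_, key⟩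
  have heval : d0.adjoint ⟨e, hedom⟩ = f - d0.adjoint ⟨vE, hvE⟩ :=
    d0.adjoint_apply_eq hd0dense ⟨e, hedom⟩ key
  have hbound := hpoincare ⟨e, hedom⟩ (by
    intro z hz
    obtain ⟨u, rfl⟩ := he
    have h := hadj z u
    rw [hz, inner_zero_left] at h
    rw [real_inner_comm]
    exact h.symm)
  rw [heval, norm_sub_rev] at hbound
  exact hbound

end
end
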